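/- Let δ(A) = α·|A| − |E(A)| with α > 0, and for A ⊆ B define A ≤ B (d-closedness) to mean δ(A) < δ(B') whenever A ⊊ B' ⊆ B. If A ≤ C and B ≤ C (both finite subgraphs of C), then A ∩ B ≤ C. -/

import Mathlib

/-!
Let `f` be submodular and `a`, `b` strictly closed in `c`. Joining `x ≤ c` with `a` strictly
increases `f a` unless `x ≤ a`, so by submodularity meeting `x` with `a` strictly decreases `f x`
unless `x ≤ a`. If `a ⊓ b < x ≤ c`, then `a ⊓ b = x ⊓ a ⊓ b` is reached from `x` by meeting with
`a` and then with `b`; since `x ≰ a ⊓ b`, the value of `f` drops strictly along the way.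

The predimension `pdim α G` is submodular because `|·|` is modular, while an edge inside `A` or
inside `B` is an edge inside `A ∪ B`, and an edge inside both is one inside `A ∩ B`.
-/

def edgeCount {V : Type*} [Fintype V] [DecidableEq V] (G : SimpleGraph V)
    [DecidableRel G.Adj] (s : Finset V) : ℕ :=
  (G.edgeFinset ∩ s.sym2).card

noncomputable def pdim {V : Type*} [Fintype V] [DecidableEq V] (α : ℝ) (G : SimpleGraph V)
    [DecidableRel G.Adj] (s : Finset V) : ℝ :=
  α * s.card - edgeCount G s

/-- `A ≤ B` : `A` is d-closed in `B`. -/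
def dClosedIn {V : Type*} [Fintype V] [DecidableEq V] (α : ℝ) (G : SimpleGraph V)
    [DecidableRel G.Adj] (A B : Finset V) : Prop :=
  A ⊆ B ∧ ∀ B' : Finset V, A ⊂ B' → B' ⊆ B → pdim α G A < pdim α G B'

section Lattice

variable {L M : Type*} [Lattice L]

/-- Submodularity of a function on a lattice, to be applied to the predimension `δ` on the lattice
of finite vertex sets. -/
def Submodular [Add M] [LE M] (f : L → M) : Prop :=
  ∀ a b : L, f (a ⊔ b) + f (a ⊓ b) ≤ f a + f b

/-- The relation `a ≤ b` of d-closedness for an arbitrary function `f` on an order in place of the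
predimension `δ`: `dClosedIn α G` unfolds to `StrictlyClosedIn (pdim α G)`. -/
def StrictlyClosedIn {P : Type*} [Preorder P] [LT M] (f : P → M) (a b : P) : Prop :=
  a ≤ b ∧ ∀ x : P, a < x → x ≤ b → f a < f x

variable [AddCommMonoid M] [PartialOrder M] [IsOrderedCancelAddMonoid M] {f : L → M} {a b c x : L}

theorem StrictlyClosedIn.inf_lt (hac : StrictlyClosedIn f a c) (hf : Submodular f) (hxc : x ≤ c)
    (hxa : ¬x ≤ a) : f (x ⊓ a) < f x := by
  have hsup : f a < f (x ⊔ a) := hac.2 (x ⊔ a) (right_lt_sup.2 hxa) (sup_le hxc hac.1)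
  refine lt_of_add_lt_add_left (a := f a) ?_
  calc
    f a + f (x ⊓ a) < f (x ⊔ a) + f (x ⊓ a) := by gcongr
    _ ≤ f x + f a := hf x a
    _ = f a + f x := add_comm _ _

theorem StrictlyClosedIn.inf_le (hac : StrictlyClosedIn f a c) (hf : Submodular f) (hxc : x ≤ c) :
    f (x ⊓ a) ≤ f x := by
  by_cases hxa : x ≤ a
  · rw [inf_eq_left.2 hxa]
  · exact (hac.inf_lt hf hxc hxa).le

theorem dClosedIn_inter_general (hf : Submodular f) (hac : StrictlyClosedIn f a c)
    (hbc : StrictlyClosedIn f b c) : StrictlyClosedIn f (a ⊓ b) c := by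
  refine ⟨inf_le_left.trans hac.1, fun x hx hxc => ?_⟩
  have hinf : x ⊓ a ⊓ b = a ⊓ b := by rw [inf_assoc, inf_eq_right.2 hx.le]
  by_cases hxa : x ≤ a
  · have hxb : ¬x ≤ b := fun hxb => hx.not_ge (le_inf hxa hxb)
    calc
      f (a ⊓ b) = f (x ⊓ b) := by rw [← hinf, inf_eq_left.2 hxa]
      _ < f x := hbc.inf_lt hf hxc hxb
  · calc
      f (a ⊓ b) = f (x ⊓ a ⊓ b) := by rw [hinf]
      _ ≤ f (x ⊓ a) := hbc.inf_le hf (inf_le_left.trans hxc)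
      _ < f x := hac.inf_lt hf hxc hxa

end Lattice

section Graph

variable {V : Type*} [DecidableEq V]

theorem sym2_union_sym2_subset (s t : Finset V) : s.sym2 ∪ t.sym2 ⊆ (s ∪ t).sym2 :=
  Finset.union_subset (Finset.sym2_mono Finset.subset_union_left)
    (Finset.sym2_mono Finset.subset_union_right)

theorem sym2_inter_sym2 (s t : Finset V) : s.sym2 ∩ t.sym2 = (s ∩ t).sym2 := by
  ext e
  simp only [Finset.mem_inter, Finset.mem_sym2_iff, forall_and]

theorem card_inter_sym2_add_card_inter_sym2_le (E : Finset (Sym2 V)) (s t : Finset V) :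
    (E ∩ s.sym2).card + (E ∩ t.sym2).card ≤
      (E ∩ (s ∪ t).sym2).card + (E ∩ (s ∩ t).sym2).card := by
  calc
    (E ∩ s.sym2).card + (E ∩ t.sym2).card
      = (E ∩ (s.sym2 ∪ t.sym2)).card + (E ∩ (s.sym2 ∩ t.sym2)).card := by
        rw [Finset.inter_union_distrib_left, Finset.inter_inter_distrib_left,
          Finset.card_union_add_card_inter]
    _ ≤ (E ∩ (s ∪ t).sym2).card + (E ∩ (s ∩ t).sym2).card := by
        rw [sym2_inter_sym2]
        gcongr
        exact sym2_union_sym2_subset s t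

theorem submodular_pdim [Fintype V] (α : ℝ) (G : SimpleGraph V) [DecidableRel G.Adj] :
    Submodular (pdim α G) := by
  intro s t
  have hcard : ((s ∪ t).card : ℝ) + (s ∩ t).card = s.card + t.card :=
    mod_cast Finset.card_union_add_card_inter s t
  have hedge : (edgeCount G s : ℝ) + edgeCount G t ≤
      edgeCount G (s ∪ t) + edgeCount G (s ∩ t) :=
    mod_cast card_inter_sym2_add_card_inter_sym2_le G.edgeFinset s t
  calc
    pdim α G (s ∪ t) + pdim α G (s ∩ t)
      = α * ((s ∪ t).card + (s ∩ t).card)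
          - (edgeCount G (s ∪ t) + edgeCount G (s ∩ t)) := by
        unfold pdim
        ring
    _ ≤ α * (s.card + t.card) - (edgeCount G s + edgeCount G t) := by
        rw [hcard]
        gcongr
    _ = pdim α G s + pdim α G t := by
        unfold pdim
        ring

end Graph

/-- If `A ≤ C` and `B ≤ C` then `A ∩ B ≤ C`. -/
theorem dClosedIn_inter {V : Type*} [Fintype V] [DecidableEq V] (G : SimpleGraph V)
    [DecidableRel G.Adj] (α : ℝ) (hα : 0 < α) (A B C : Finset V)
    (hAC : dClosedIn α G A C) (hBC : dClosedIn α G B C) : dClosedIn α G (A ∩ B) C :=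
  dClosedIn_inter_general (submodular_pdim α G) hAC hBC
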